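/- arXiv:1609.01485 — 3 statements merged into one kernel-verified Lean document; each statement's English description precedes it below -/
import Mathlib

section
/- There exists a unique λ > 0 such that the solution u : [0, L] → ℝ of the initial value problem u''(x) = (λ·cosh²(x) − 2/cosh²(x))·u(x), u(0) = 1, u'(0) = 0 satisfies u(L) = L·u'(L); moreover this λ satisfies λ < 3. -/
/-!
For `λ > 0` the even solution `u` is compared with two explicit functions through the Wronskian
`u₁' u₂ - u₁ u₂'`, whose derivative is the difference of the potentials times `u₁ u₂`
(`wronskian_pos`).

* At `λ = 0` the even solution is `v = 1 - x tanh x`, positive on `[0, L)` and zero at `L`.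
  Comparison with `v` shows that `u > 0` on `[0, L]` whenever `λ > 0` (`IVPEven.pos`).
* If two values `λ < μ` both satisfied the Robin condition, the Wronskian of the two positive
  solutions would vanish at `L`, contradicting its positivity (`robin_unique`).
* At `λ = 3` the potential is larger than `1` on `(0, L)`, so comparison with `cosh`, for which
  `cosh L = L sinh L`, gives `u L < L u' L`; at `λ = 0` one has `v L = 0 > L v' L`.
  Hence `u L - L u' L`, which is continuous in `λ` by Grönwall's inequality (`robin_lipschitz`),
  vanishes somewhere in `(0, 3)`.

Existence on all of `[0, L]` (`exists_ivp`) comes from the Picard–Lindelöf theorem applied to a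
truncation of the linear vector field: an a priori exponential bound shows that the solution never
leaves the region where the truncation is inactive.
-/

/-- `u` (with derivative `u'`) solves `u'' = (λ cosh²x − 2/cosh²x) u` on `[0, L]`
with `u 0 = 1`, `u' 0 = 0`. -/
def IVPEven (L lam : ℝ) (u u' : ℝ → ℝ) : Prop :=
  (∀ x ∈ Set.Icc 0 L, HasDerivWithinAt u (u' x) (Set.Icc 0 L) x) ∧
  (∀ x ∈ Set.Icc 0 L, HasDerivWithinAt u'
    ((lam * Real.cosh x ^ 2 - 2 / Real.cosh x ^ 2) * u x) (Set.Icc 0 L) x) ∧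
  u 0 = 1 ∧ u' 0 = 0

open Set Real Topology Filter

/-! ### Comparison of solutions -/

/-- Sturm comparison: if `u'' = P u`, `w'' = Q w` with `Q < P` and `u, w` positive inside `[0, z]`,
then the Wronskian is positive at `z` as soon as it vanishes at `0`. -/
lemma wronskian_pos {z : ℝ} (hz : 0 < z) {u u' w w' P Q : ℝ → ℝ}
    (hu : ∀ x ∈ Icc 0 z, HasDerivWithinAt u (u' x) (Icc 0 z) x)
    (hu' : ∀ x ∈ Icc 0 z, HasDerivWithinAt u' (P x * u x) (Icc 0 z) x)
    (hw : ∀ x ∈ Icc 0 z, HasDerivWithinAt w (w' x) (Icc 0 z) x)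
    (hw' : ∀ x ∈ Icc 0 z, HasDerivWithinAt w' (Q x * w x) (Icc 0 z) x)
    (h0 : u' 0 * w 0 - u 0 * w' 0 = 0)
    (hpu : ∀ x ∈ Ioo 0 z, 0 < u x) (hpw : ∀ x ∈ Ioo 0 z, 0 < w x)
    (hPQ : ∀ x ∈ Ioo 0 z, Q x < P x) :
    0 < u' z * w z - u z * w' z := by
  have hd : ∀ x ∈ Icc 0 z, HasDerivWithinAt (fun x => u' x * w x - u x * w' x)
      ((P x - Q x) * (u x * w x)) (Icc 0 z) x := by
    intro x hx
    convert! ((hu' x hx).mul (hw x hx)).sub ((hu x hx).mul (hw' x hx)) using 1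
    ring
  have hmono : StrictMonoOn (fun x => u' x * w x - u x * w' x) (Icc 0 z) := by
    apply strictMonoOn_of_deriv_pos (convex_Icc 0 z)
    · exact fun x hx => (hd x hx).continuousWithinAt
    · intro x hx
      rw [interior_Icc] at hx
      rw [((hd x (Ioo_subset_Icc_self hx)).hasDerivAt (Icc_mem_nhds hx.1 hx.2)).deriv]
      exact mul_pos (sub_pos.2 (hPQ x hx)) (mul_pos (hpu x hx) (hpw x hx))
  have := hmono (left_mem_Icc.2 hz.le) (right_mem_Icc.2 hz.le) hz
  simpa only [h0] using this

/-- The even zero-mode `1 - x tanh x` is positive before its zero `L`. -/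
lemma zeroMode_pos {L : ℝ} (hL1 : L * tanh L = 1) {x : ℝ} (hx : 0 ≤ x) (hxL : x < L) :
    0 < 1 - x * (sinh x / cosh x) := by
  have hc := cosh_pos x
  have hanti : StrictAntiOn (fun x : ℝ => cosh x - x * sinh x) (Ici 0) := by
    apply strictAntiOn_of_deriv_neg (convex_Ici 0)
    · fun_prop
    · intro y hy
      rw [interior_Ici] at hy
      have hd : HasDerivAt (fun x : ℝ => cosh x - x * sinh x)
          (sinh y - (1 * sinh y + y * cosh y)) y :=
        (hasDerivAt_cosh y).sub ((hasDerivAt_id' y).mul (hasDerivAt_sinh y))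
      rw [hd.deriv]
      have := mul_pos (mem_Ioi.1 hy) (cosh_pos y)
      linarith
  have h := hanti (mem_Ici.2 hx) (mem_Ici.2 (hx.trans hxL.le)) hxL
  have hcL := cosh_pos L
  have hLe : cosh L - L * sinh L = 0 := by
    rw [tanh_eq_sinh_div_cosh] at hL1
    field_simp at hL1
    linarith
  simp only [hLe] at h
  have : 1 - x * (sinh x / cosh x) = (cosh x - x * sinh x) / cosh x := by field_simp
  rw [this]
  exact div_pos h hc

/-- The even zero-mode solves the initial value problem with `λ = 0`. -/
lemma zeroMode_ivp (L : ℝ) : IVPEven L 0 (fun x => 1 - x * (sinh x / cosh x))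
    (fun x => -(sinh x / cosh x) - x / cosh x ^ 2) := by
  have ht : ∀ x : ℝ, HasDerivAt (fun x : ℝ => sinh x / cosh x) (1 / cosh x ^ 2) x := by
    intro x
    convert! (hasDerivAt_sinh x).div (hasDerivAt_cosh x) (cosh_pos x).ne' using 1
    have := cosh_sq x
    congr 1
    linarith
  refine ⟨fun x _ => HasDerivAt.hasDerivWithinAt ?_, fun x _ => HasDerivAt.hasDerivWithinAt ?_,
    by simp, by simp⟩
  · convert! ((hasDerivAt_id' x).mul (ht x)).const_sub 1 using 1
    ring
  · convert! (ht x).neg.sub ((hasDerivAt_id' x).div ((hasDerivAt_cosh x).pow 2)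
      (pow_pos (cosh_pos x) 2).ne') using 1
    have := (cosh_pos x).ne'
    field_simp
    simp
    ring

lemma IVPEven.mono {L z lam : ℝ} {u u' : ℝ → ℝ} (h : IVPEven L lam u u') (hz : z ≤ L) :
    IVPEven z lam u u' := by
  have hs : Icc 0 z ⊆ Icc 0 L := Icc_subset_Icc_right hz
  exact ⟨fun x hx => (h.1 x (hs hx)).mono hs, fun x hx => (h.2.1 x (hs hx)).mono hs, h.2.2⟩

/-- For `λ > 0` the even solution stays positive. At a first zero `p` one would have `u' p ≤ 0`,
whereas comparison with the zero-mode forces `u' p > 0`. -/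
lemma IVPEven.pos {L lam : ℝ} (hL1 : L * tanh L = 1) (hlam : 0 < lam)
    {u u' : ℝ → ℝ} (h : IVPEven L lam u u') : ∀ x ∈ Icc 0 L, 0 < u x := by
  by_contra! hcon
  obtain ⟨y, hy, hyu⟩ := hcon
  have hcont : ContinuousOn u (Icc 0 L) := fun x hx => (h.1 x hx).continuousWithinAt
  have hcomp : IsCompact (Icc 0 L ∩ u ⁻¹' Iic 0) :=
    isCompact_Icc.of_isClosed_subset (hcont.preimage_isClosed_of_isClosed isClosed_Icc isClosed_Iic)
      inter_subset_left
  obtain ⟨p, ⟨hp, hpu⟩, hmin⟩ := hcomp.exists_isLeast ⟨y, hy, hyu⟩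
  have hpu : u p ≤ 0 := hpu
  have hbelow : ∀ x ∈ Ico 0 p, 0 < u x := by
    intro x hx
    by_contra! hxu
    exact absurd (hmin ⟨⟨hx.1, hx.2.le.trans hp.2⟩, hxu⟩) (not_le.2 hx.2)
  have hp0 : 0 < p := by
    rcases hp.1.eq_or_lt with e | e
    · rw [← e, h.2.2.1] at hpu
      linarith
    · exact e
  have hslope : u' p ≤ 0 := by
    have hd : HasDerivWithinAt u (u' p) (Ico 0 p) p :=
      (h.1 p hp).mono fun x hx => ⟨hx.1, hx.2.le.trans hp.2⟩
    rw [hasDerivWithinAt_iff_tendsto_slope' (by simp)] at hd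
    have : (𝓝[Ico 0 p] p).NeBot := by
      rw [← mem_closure_iff_nhdsWithin_neBot, closure_Ico hp0.ne]
      exact right_mem_Icc.2 hp0.le
    refine le_of_tendsto hd ?_
    filter_upwards [self_mem_nhdsWithin] with x hx
    rw [slope_def_field]
    exact div_nonpos_of_nonneg_of_nonpos (by linarith [hbelow x hx]) (by linarith [hx.2])
  have hup : 0 ≤ u p := by
    have hc : ContinuousWithinAt u (Ico 0 p) p :=
      (hcont p hp).mono fun x hx => ⟨hx.1, hx.2.le.trans hp.2⟩
    have : (𝓝[Ico 0 p] p).NeBot := by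
      rw [← mem_closure_iff_nhdsWithin_neBot, closure_Ico hp0.ne]
      exact right_mem_Icc.2 hp0.le
    refine ge_of_tendsto hc.tendsto ?_
    filter_upwards [self_mem_nhdsWithin] with x hx using (hbelow x hx).le
  have hv := (zeroMode_ivp L).mono hp.2
  have hu := h.mono hp.2
  have hW := wronskian_pos hp0 hu.1 hu.2.1 hv.1 hv.2.1 (by simp [h.2.2.1, h.2.2.2])
    (fun x hx => hbelow x ⟨hx.1.le, hx.2⟩)
    (fun x hx => zeroMode_pos hL1 hx.1.le (hx.2.trans_le hp.2))
    (fun x hx => by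
      have := mul_pos hlam (pow_pos (cosh_pos x) 2)
      linarith)
  have hvp : 0 ≤ 1 - p * (sinh p / cosh p) := by
    rcases hp.2.eq_or_lt with e | e
    · rw [e, ← tanh_eq_sinh_div_cosh, hL1, sub_self]
    · exact (zeroMode_pos hL1 hp.1 e).le
  have hu0 : u p = 0 := le_antisymm hpu hup
  rw [hu0] at hW
  have := mul_nonpos_of_nonpos_of_nonneg hslope hvp
  linarith

lemma robin_unique {L : ℝ} (hL : 0 < L) (hL1 : L * tanh L = 1) {lam mu : ℝ}
    (hlam : 0 < lam) (hlt : lam < mu) {u u' w w' : ℝ → ℝ}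
    (hu : IVPEven L lam u u') (huL : u L = L * u' L)
    (hw : IVPEven L mu w w') (hwL : w L = L * w' L) : False := by
  have hW := wronskian_pos hL hw.1 hw.2.1 hu.1 hu.2.1
    (by simp [hu.2.2.2, hw.2.2.2])
    (fun x hx => hw.pos hL1 (hlam.trans hlt) x (Ioo_subset_Icc_self hx))
    (fun x hx => hu.pos hL1 hlam x (Ioo_subset_Icc_self hx))
    (fun x _ => by
      have := mul_lt_mul_of_pos_right hlt (pow_pos (cosh_pos x) 2)
      linarith)
  rw [huL, hwL] at hW
  linarith

/-- At `λ = 3` the logarithmic derivative of the solution at `L` exceeds that of `cosh`. -/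
lemma robin_three {L : ℝ} (hL : 0 < L) (hL1 : L * tanh L = 1) {u u' : ℝ → ℝ}
    (hu : IVPEven L 3 u u') : u L < L * u' L := by
  have hW := wronskian_pos (w := cosh) (w' := sinh) (Q := fun _ => 1) hL hu.1 hu.2.1
    (fun x _ => (hasDerivAt_cosh x).hasDerivWithinAt)
    (fun x _ => by simpa using (hasDerivAt_sinh x).hasDerivWithinAt)
    (by simp [hu.2.2.2])
    (fun x hx => hu.pos hL1 (by norm_num) x (Ioo_subset_Icc_self hx))
    (fun x _ => cosh_pos x)
    (fun x hx => by
      have h1 : 1 < cosh x ^ 2 := one_lt_pow₀ (one_lt_cosh.2 hx.1.ne') two_ne_zero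
      have h2 : 2 / cosh x ^ 2 < 2 := by
        rw [div_lt_iff₀ (by linarith)]
        linarith
      linarith)
  have hc := cosh_pos L
  rw [tanh_eq_sinh_div_cosh] at hL1
  have hLe : L * sinh L = cosh L := by
    field_simp at hL1
    linarith
  have : 0 < (L * u' L - u L) * cosh L := by
    have := mul_pos hL hW
    calc 0 < L * (u' L * cosh L - u L * sinh L) := this
      _ = L * u' L * cosh L - u L * (L * sinh L) := by ring
      _ = _ := by rw [hLe]; ring
  linarith [(pos_iff_pos_of_mul_pos this).2 hc]

/-! ### Existence and continuous dependence -/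

/-- Grönwall's inequality for a pair of real functions, with the sup norm on `ℝ × ℝ`. -/
lemma pair_gronwall {L K δ ε : ℝ} (hK : 1 ≤ K) (hδ : 0 ≤ δ) (hε : 0 ≤ ε) {a b a' b' : ℝ → ℝ}
    (ha : ∀ x ∈ Icc 0 L, HasDerivWithinAt a (a' x) (Icc 0 L) x)
    (hb : ∀ x ∈ Icc 0 L, HasDerivWithinAt b (b' x) (Icc 0 L) x)
    (ha0 : |a 0| ≤ δ) (hb0 : |b 0| ≤ δ)
    (ha' : ∀ x ∈ Icc 0 L, |a' x| ≤ K * max |a x| |b x| + ε)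
    (hb' : ∀ x ∈ Icc 0 L, |b' x| ≤ K * max |a x| |b x| + ε) :
    ∀ x ∈ Icc 0 L, max |a x| |b x| ≤ (δ + ε) * exp (K * L) := by
  intro x hx
  have hd : ∀ x ∈ Icc 0 L,
      HasDerivWithinAt (fun t => (a t, b t)) (a' x, b' x) (Icc 0 L) x :=
    fun x hx => (ha x hx).prodMk (hb x hx)
  have h := norm_le_gronwallBound_of_norm_deriv_right_le (f := fun t => (a t, b t))
    (f' := fun t => (a' t, b' t)) (δ := δ) (K := K) (ε := ε) (a := 0) (b := L)
    (fun x hx => (hd x hx).continuousWithinAt)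
    (fun x hx => (hd x (Ico_subset_Icc_self hx)).mono_of_mem_nhdsWithin
      (mem_of_superset (Icc_mem_nhdsGE hx.2) (Icc_subset_Icc_left hx.1)))
    (by simpa [Prod.norm_def] using ⟨ha0, hb0⟩)
    (fun x hx => by
      simpa [Prod.norm_def] using
        And.intro (ha' x (Ico_subset_Icc_self hx)) (hb' x (Ico_subset_Icc_self hx)))
    x hx
  have hK0 : 0 < K := by linarith
  rw [gronwallBound_of_K_ne_0 hK0.ne', sub_zero] at h
  have h' : max |a x| |b x| ≤ δ * exp (K * x) + ε / K * (exp (K * x) - 1) := h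
  have hexp : exp (K * x) ≤ exp (K * L) :=
    exp_le_exp.2 (mul_le_mul_of_nonneg_left hx.2 hK0.le)
  have hexp1 : 1 ≤ exp (K * x) := one_le_exp (mul_nonneg hK0.le hx.1)
  have h1 : ε / K ≤ ε := div_le_self hε hK
  have h2 : ε / K * (exp (K * x) - 1) ≤ ε * exp (K * L) :=
    mul_le_mul h1 (by linarith) (by linarith) hε
  have h3 : δ * exp (K * x) ≤ δ * exp (K * L) := mul_le_mul_of_nonneg_left hexp hδ
  linarith

/-- Truncation of a real number to `[-R, R]`. -/
noncomputable def clamp (R y : ℝ) : ℝ := max (-R) (min R y)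

lemma clamp_lipschitz (R x y : ℝ) : |clamp R x - clamp R y| ≤ |x - y| := by
  unfold clamp
  refine (abs_max_sub_max_le_max _ _ _ _).trans ?_
  rw [sub_self, abs_zero, max_eq_right (abs_nonneg _)]
  refine (abs_min_sub_min_le_max _ _ _ _).trans ?_
  rw [sub_self, abs_zero, max_eq_right (abs_nonneg _)]

lemma abs_clamp_le {R : ℝ} (hR : 0 ≤ R) (y : ℝ) : |clamp R y| ≤ R := by
  unfold clamp
  rw [abs_le]
  exact ⟨le_max_left _ _, max_le (by linarith) (min_le_left _ _)⟩

lemma clamp_eq {R y : ℝ} (h : |y| ≤ R) : clamp R y = y := by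
  unfold clamp
  rw [abs_le] at h
  rw [min_eq_right h.2, max_eq_right h.1]

lemma abs_clamp_le_abs {R : ℝ} (hR : 0 ≤ R) (y : ℝ) : |clamp R y| ≤ |y| := by
  have h := clamp_lipschitz R y 0
  rwa [clamp_eq (y := 0) (by simpa using hR), sub_zero, sub_zero] at h

/-- Solvability on all of `[0, L]` of a linear second order equation with continuous potential. -/
lemma exists_linear_solution {L K : ℝ} (hL : 0 < L) (hK : 1 ≤ K) {q : ℝ → ℝ} (hq : Continuous q)
    (hqK : ∀ x ∈ Icc 0 L, |q x| ≤ K) :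
    ∃ u u' : ℝ → ℝ, (∀ x ∈ Icc 0 L, HasDerivWithinAt u (u' x) (Icc 0 L) x) ∧
      (∀ x ∈ Icc 0 L, HasDerivWithinAt u' (q x * u x) (Icc 0 L) x) ∧ u 0 = 1 ∧ u' 0 = 0 := by
  -- The a priori bound: solutions with initial data `(1, 0)` stay in the ball of radius `R`.
  set R : ℝ := exp (K * L) with hR
  have hR0 : 0 < R := exp_pos _
  have hK0 : 0 < K := by linarith
  let g : ℝ → ℝ × ℝ → ℝ × ℝ := fun t p => (clamp R p.2, q t * clamp R p.1)
  have hPL : IsPicardLindelof g (tmin := 0) (tmax := L) ⟨0, left_mem_Icc.2 hL.le⟩ ((1, 0) : ℝ × ℝ)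
      (K * R * L).toNNReal 0 (K * R).toNNReal K.toNNReal := by
    refine ⟨fun t ht => ?_, fun x _ => ?_, fun t ht x _ => ?_, ?_⟩
    · refine LipschitzWith.lipschitzOnWith (LipschitzWith.of_dist_le_mul fun x y => ?_)
      rw [coe_toNNReal _ hK0.le, dist_eq_norm, dist_eq_norm]
      simp only [g, Prod.norm_def, Prod.fst_sub, Prod.snd_sub, norm_eq_abs, ← mul_sub, abs_mul]
      refine max_le ?_ ?_
      · calc _ ≤ |x.2 - y.2| := clamp_lipschitz _ _ _
          _ ≤ 1 * max |x.1 - y.1| |x.2 - y.2| := by rw [one_mul]; exact le_max_right _ _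
          _ ≤ _ := by gcongr
      · exact mul_le_mul (hqK t ht) ((clamp_lipschitz _ _ _).trans (le_max_left _ _))
          (abs_nonneg _) hK0.le
    · simp only [g]
      fun_prop
    · rw [coe_toNNReal _ (by positivity)]
      simp only [g, Prod.norm_def, norm_eq_abs, abs_mul]
      refine max_le ?_ ?_
      · exact (abs_clamp_le hR0.le _).trans (le_mul_of_one_le_left hR0.le hK)
      · exact mul_le_mul (hqK t ht) (abs_clamp_le hR0.le _) (abs_nonneg _) hK0.le
    · rw [coe_toNNReal _ (by positivity), coe_toNNReal _ (by positivity)]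
      simp [hL.le]
  obtain ⟨f, hf0, hf⟩ := hPL.exists_eq_forall_mem_Icc_hasDerivWithinAt₀
  have hf0 : f 0 = (1, 0) := hf0
  have h1 : ∀ x ∈ Icc 0 L, HasDerivWithinAt (fun t => (f t).1) (clamp R (f x).2) (Icc 0 L) x :=
    fun x hx => (hf x hx).fst
  have h2 : ∀ x ∈ Icc 0 L,
      HasDerivWithinAt (fun t => (f t).2) (q x * clamp R (f x).1) (Icc 0 L) x :=
    fun x hx => (hf x hx).snd
  have hb := pair_gronwall hK (δ := 1) (ε := 0) zero_le_one le_rfl h1 h2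
    (by simp [hf0]) (by simp [hf0])
    (fun x _ => by
      rw [add_zero]
      calc _ ≤ |(f x).2| := abs_clamp_le_abs hR0.le _
        _ ≤ 1 * max |(f x).1| |(f x).2| := by rw [one_mul]; exact le_max_right _ _
        _ ≤ _ := by gcongr)
    (fun x hx => by
      rw [add_zero, abs_mul]
      exact mul_le_mul (hqK x hx) ((abs_clamp_le_abs hR0.le _).trans (le_max_left _ _))
        (abs_nonneg _) hK0.le)
  rw [add_zero, one_mul] at hb
  refine ⟨fun t => (f t).1, fun t => (f t).2, fun x hx => ?_, fun x hx => ?_,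
    by simp [hf0], by simp [hf0]⟩
  · have h := h1 x hx
    rwa [clamp_eq ((le_max_right _ _).trans (hb x hx))] at h
  · have h := h2 x hx
    rwa [clamp_eq ((le_max_left _ _).trans (hb x hx))] at h

lemma potential_bound {L lam x : ℝ} (hlam : lam ∈ Icc (0 : ℝ) 3) (hx : x ∈ Icc 0 L) :
    |lam * cosh x ^ 2 - 2 / cosh x ^ 2| ≤ 3 * cosh L ^ 2 + 2 := by
  have h1 : 1 ≤ cosh x ^ 2 := one_le_pow₀ (one_le_cosh x)
  have h2 : cosh x ^ 2 ≤ cosh L ^ 2 := by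
    gcongr
    exact cosh_le_cosh.2 (by rw [abs_of_nonneg hx.1]; exact hx.2.trans (le_abs_self L))
  have h3 : 2 / cosh x ^ 2 ≤ 2 := div_le_self zero_le_two h1
  have h4 : 0 ≤ 2 / cosh x ^ 2 := by positivity
  have h5 : 0 ≤ lam * cosh x ^ 2 := mul_nonneg hlam.1 (by positivity)
  have h6 : lam * cosh x ^ 2 ≤ 3 * cosh L ^ 2 :=
    mul_le_mul hlam.2 h2 (by positivity) (by norm_num)
  rw [abs_le]
  constructor <;> linarith

lemma exists_ivp {L lam : ℝ} (hL : 0 < L) (hlam : lam ∈ Icc (0 : ℝ) 3) :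
    ∃ u u' : ℝ → ℝ, IVPEven L lam u u' :=
  exists_linear_solution (K := 3 * cosh L ^ 2 + 2) hL (by nlinarith [sq_nonneg (cosh L)])
    (by
      have : ∀ x : ℝ, cosh x ^ 2 ≠ 0 := fun x => (pow_pos (cosh_pos x) 2).ne'
      fun_prop (disch := exact this _))
    (fun _ hx => potential_bound hlam hx)

/-- Lipschitz dependence of the Robin defect `u L - L u' L` on `λ ∈ [0, 3]`; for equal parameters
this contains the uniqueness of its value. -/
lemma robin_lipschitz {L : ℝ} (hL : 0 < L) : ∃ D : ℝ, ∀ lam ∈ Icc (0 : ℝ) 3,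
    ∀ mu ∈ Icc (0 : ℝ) 3, ∀ u u' w w' : ℝ → ℝ, IVPEven L lam u u' → IVPEven L mu w w' →
      |(u L - L * u' L) - (w L - L * w' L)| ≤ D * |lam - mu| := by
  set K : ℝ := 3 * cosh L ^ 2 + 2 with hKdef
  have hK : 1 ≤ K := by nlinarith [sq_nonneg (cosh L)]
  have hK0 : 0 < K := by linarith
  refine ⟨(1 + L) * (cosh L ^ 2 * exp (K * L) * exp (K * L)), ?_⟩
  intro lam hlam mu hmu u u' w w' hu hw
  have hwb := pair_gronwall hK (δ := 1) (ε := 0) zero_le_one le_rfl hw.1 hw.2.1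
    (by simp [hw.2.2.1]) (by simp [hw.2.2.2])
    (fun x _ => by
      rw [add_zero]
      calc _ ≤ 1 * max |w x| |w' x| := by rw [one_mul]; exact le_max_right _ _
        _ ≤ _ := by gcongr)
    (fun x hx => by
      rw [add_zero, abs_mul]
      exact mul_le_mul (potential_bound hmu hx) (le_max_left _ _) (abs_nonneg _) hK0.le)
  rw [add_zero, one_mul] at hwb
  set ε : ℝ := |lam - mu| * (cosh L ^ 2 * exp (K * L)) with hε
  have hε0 : 0 ≤ ε := by positivity
  have hd := pair_gronwall hK (δ := 0) (ε := ε) le_rfl hε0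
    (fun x hx => (hu.1 x hx).sub (hw.1 x hx)) (fun x hx => (hu.2.1 x hx).sub (hw.2.1 x hx))
    (by simp [hu.2.2.1, hw.2.2.1]) (by simp [hu.2.2.2, hw.2.2.2])
    (fun x _ => by
      have : |u' x - w' x| ≤ K * max |u x - w x| |u' x - w' x| := by
        calc _ ≤ 1 * max |u x - w x| |u' x - w' x| := by rw [one_mul]; exact le_max_right _ _
          _ ≤ _ := by gcongr
      simp only [Pi.sub_apply]
      linarith)
    (fun x hx => by
      simp only [Pi.sub_apply]
      have e : (lam * cosh x ^ 2 - 2 / cosh x ^ 2) * u x - (mu * cosh x ^ 2 - 2 / cosh x ^ 2) * w x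
          = (lam * cosh x ^ 2 - 2 / cosh x ^ 2) * (u x - w x)
            + (lam - mu) * (cosh x ^ 2 * w x) := by ring
      rw [e]
      refine (abs_add_le _ _).trans (add_le_add ?_ ?_)
      · rw [abs_mul]
        exact mul_le_mul (potential_bound hlam hx) (le_max_left _ _) (abs_nonneg _) hK0.le
      · have hc : cosh x ≤ cosh L :=
          cosh_le_cosh.2 (by rw [abs_of_nonneg hx.1]; exact hx.2.trans (le_abs_self L))
        have hwx : |w x| ≤ exp (K * L) := (le_max_left _ _).trans (hwb x hx)
        rw [abs_mul, abs_mul, abs_of_nonneg (sq_nonneg (cosh x)), hε]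
        gcongr)
    L (right_mem_Icc.2 hL.le)
  simp only [Pi.sub_apply, zero_add] at hd
  have h1 := (le_max_left _ _).trans hd
  have h2 := (le_max_right _ _).trans hd
  calc |(u L - L * u' L) - (w L - L * w' L)| = |(u L - w L) - L * (u' L - w' L)| := by ring_nf
    _ ≤ |u L - w L| + |L * (u' L - w' L)| := abs_sub _ _
    _ = |u L - w L| + L * |u' L - w' L| := by rw [abs_mul, abs_of_pos hL]
    _ ≤ ε * exp (K * L) + L * (ε * exp (K * L)) := by gcongr
    _ = _ := by rw [hε]; ring

/-- There is a unique `λ > 0` for which the even solution of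
`u'' = (λ cosh²x − 2/cosh²x) u`, `u 0 = 1`, `u' 0 = 0` satisfies `u L = L·u' L`;
moreover it satisfies `λ < 3`. Here `L` is the unique positive real with `L·tanh L = 1`. -/
theorem unique_even_eigenvalue_mode_zero
    (L : ℝ) (hL : 0 < L) (hL1 : L * Real.tanh L = 1) :
    ∃ lam : ℝ, (0 < lam ∧ lam < 3 ∧
        ∃ u u' : ℝ → ℝ, IVPEven L lam u u' ∧ u L = L * u' L) ∧
      ∀ mu : ℝ, 0 < mu →
        (∃ u u' : ℝ → ℝ, IVPEven L mu u u' ∧ u L = L * u' L) → mu = lam := by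
  have hex : ∀ lam : ℝ, ∃ p : (ℝ → ℝ) × (ℝ → ℝ), lam ∈ Icc (0 : ℝ) 3 → IVPEven L lam p.1 p.2 := by
    intro lam
    by_cases h : lam ∈ Icc (0 : ℝ) 3
    · obtain ⟨u, u', hu⟩ := exists_ivp hL h
      exact ⟨(u, u'), fun _ => hu⟩
    · exact ⟨(0, 0), fun h' => absurd h' h⟩
  choose s hs using hex
  obtain ⟨D, hD⟩ := robin_lipschitz hL
  set F : ℝ → ℝ := fun lam => (s lam).1 L - L * (s lam).2 L with hF
  have hFc : ContinuousOn F (Icc 0 3) :=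
    (LipschitzOnWith.of_dist_le' (K := D) fun x hx y hy => by
      simpa only [Real.dist_eq] using
        hD x hx y hy _ _ _ _ (hs x hx) (hs y hy)).continuousOn
  have m0 : (0 : ℝ) ∈ Icc (0 : ℝ) 3 := by norm_num
  have m3 : (3 : ℝ) ∈ Icc (0 : ℝ) 3 := by norm_num
  have hF0 : 0 < F 0 := by
    have h := hD 0 m0 0 m0 _ _ _ _ (hs 0 m0) (zeroMode_ivp L)
    rw [sub_self, abs_zero, mul_zero, abs_nonpos_iff, sub_eq_zero] at h
    have hF0 : F 0 = _ := h
    rw [hF0, ← tanh_eq_sinh_div_cosh, hL1]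
    have : 0 < L * (L / cosh L ^ 2) := mul_pos hL (div_pos hL (pow_pos (cosh_pos L) 2))
    linarith
  have hF3 : F 3 < 0 := sub_neg.2 (robin_three hL hL1 (hs 3 m3))
  obtain ⟨lam, hlam, hz⟩ := intermediate_value_Icc' (by norm_num) hFc
    (show (0 : ℝ) ∈ Icc (F 3) (F 0) from ⟨hF3.le, hF0.le⟩)
  have hpos : 0 < lam := hlam.1.lt_of_ne fun e => by
    rw [← e] at hz
    exact hF0.ne' hz
  have hlt : lam < 3 := hlam.2.lt_of_ne fun e => by
    rw [e] at hz
    exact hF3.ne hz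
  have hroot : (s lam).1 L = L * (s lam).2 L := sub_eq_zero.1 hz
  refine ⟨lam, ⟨hpos, hlt, (s lam).1, (s lam).2, hs lam hlam, hroot⟩, ?_⟩
  rintro mu hmu ⟨u, u', hu, huL⟩
  rcases lt_trichotomy mu lam with h | h | h
  · exact (robin_unique hL hL1 hmu h hu huL (hs lam hlam) hroot).elim
  · exact h
  · exact (robin_unique hL hL1 hpos h (hs lam hlam) hroot hu huL).elim
end

section
/- There exists a unique λ > 0 such that the solution v : [0, L] → ℝ of the initial value problem v''(x) = (λ·cosh²(x) − 2/cosh²(x))·v(x), v(0) = 0, v'(0) = 1 satisfies v(L) = L·v'(L); moreover this λ satisfies λ < 3. -/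
/-!
Existence is a shooting argument in `λ`, uniqueness is a Wronskian argument; both rest on positivity
of the solution.

*Positivity* (`IVPOdd.pos`). For `λ = 0` the odd solution is `tanh`. For `λ ≥ 0` the Wronskian
`tanh · v' - tanh' · v` has derivative `λ sinh cosh v`, so it is nonnegative as long as `v` is
positive; then `v / tanh` is nondecreasing and `v` cannot vanish on `(0, L]`.

*Uniqueness* (`IVPOdd.false_of_lt`). If solutions `v`, `w` for `λ < μ` both satisfy the Robin
condition, then `v w' - v' w` vanishes at `0` and at `L`, although its derivative
`(μ - λ) cosh² v w` is positive.

*Existence and `λ < 3`.* The function `F(λ) = v(L) - L v'(L)` is continuous on `[0, 3]`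
(`exists_solutions`). At `λ = 0`, comparison with `tanh` gives `v'(L) / v(L) = L - 1 / L`, and
`L² < 2` (`sq_lt_two`) makes `F(0) > 0`. At `λ = 3`, since `3 cosh² - 2 / cosh² ≥ 1`, comparison
with `sinh` gives `v'(L) / v(L) ≥ coth L = L > 1 / L`, so `F(3) < 0`. The intermediate value theorem
provides a zero in `(0, 3)`.

Mathlib's Picard-Lindelöf theorem is local, with a time bound depending on the size of the vector
field. It is applied to the first-order system with `λ` adjoined as a constant state component
(so that Lipschitz dependence on initial data yields continuity in `λ`) and with the state truncated
at the size `exp (C L)` of the a priori Grönwall bound: the truncated field is bounded, so solutions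
exist on all of `[0, L]`, and they never reach the truncation.
-/

/-- `v` (with derivative `v'`) solves `v'' = (λ cosh²x − 2/cosh²x) v` on `[0, L]`
with `v 0 = 0`, `v' 0 = 1`. -/
def IVPOdd (L lam : ℝ) (v v' : ℝ → ℝ) : Prop :=
  (∀ x ∈ Set.Icc 0 L, HasDerivWithinAt v (v' x) (Set.Icc 0 L) x) ∧
  (∀ x ∈ Set.Icc 0 L, HasDerivWithinAt v'
    ((lam * Real.cosh x ^ 2 - 2 / Real.cosh x ^ 2) * v x) (Set.Icc 0 L) x) ∧
  v 0 = 0 ∧ v' 0 = 1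
/-! ### Endpoint comparison from the sign of the derivative -/

open Set in
lemma le_of_hasDerivAt_nonneg {a b : ℝ} (hab : a ≤ b) {f f' : ℝ → ℝ}
    (hc : ContinuousOn f (Icc a b)) (hd : ∀ x ∈ Ioo a b, HasDerivAt f (f' x) x)
    (h0 : ∀ x ∈ Ioo a b, 0 ≤ f' x) : f a ≤ f b := by
  refine monotoneOn_of_deriv_nonneg (convex_Icc a b) hc ?_ ?_ (left_mem_Icc.2 hab)
    (right_mem_Icc.2 hab) hab
  · rw [interior_Icc]
    exact fun x hx => (hd x hx).differentiableAt.differentiableWithinAt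
  · rw [interior_Icc]
    exact fun x hx => by rw [(hd x hx).deriv]; exact h0 x hx

open Set in
lemma lt_of_hasDerivAt_pos {a b : ℝ} (hab : a < b) {f f' : ℝ → ℝ}
    (hc : ContinuousOn f (Icc a b)) (hd : ∀ x ∈ Ioo a b, HasDerivAt f (f' x) x)
    (h0 : ∀ x ∈ Ioo a b, 0 < f' x) : f a < f b := by
  refine strictMonoOn_of_deriv_pos (convex_Icc a b) hc ?_ (left_mem_Icc.2 hab.le)
    (right_mem_Icc.2 hab.le) hab
  rw [interior_Icc]
  exact fun x hx => by rw [(hd x hx).deriv]; exact h0 x hx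

/-! ### Solutions of the initial value problem -/

namespace IVPOdd

variable {L lam : ℝ} {v v' : ℝ → ℝ}

open Set

lemma continuousOn (h : IVPOdd L lam v v') : ContinuousOn v (Icc 0 L) :=
  fun x hx => (h.1 x hx).continuousWithinAt

lemma continuousOn' (h : IVPOdd L lam v v') : ContinuousOn v' (Icc 0 L) :=
  fun x hx => (h.2.1 x hx).continuousWithinAt

lemma hasDerivAt (h : IVPOdd L lam v v') {x : ℝ} (hx : x ∈ Ioo 0 L) : HasDerivAt v (v' x) x :=
  (h.1 x (Ioo_subset_Icc_self hx)).hasDerivAt (Icc_mem_nhds hx.1 hx.2)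

lemma hasDerivAt' (h : IVPOdd L lam v v') {x : ℝ} (hx : x ∈ Ioo 0 L) :
    HasDerivAt v' ((lam * Real.cosh x ^ 2 - 2 / Real.cosh x ^ 2) * v x) x :=
  (h.2.1 x (Ioo_subset_Icc_self hx)).hasDerivAt (Icc_mem_nhds hx.1 hx.2)

open Filter Topology in
lemma exists_pos_near_zero (hL : 0 < L) (h : IVPOdd L lam v v') :
    ∃ e ∈ Ioc 0 L, ∀ x ∈ Ioo 0 e, 0 < v x := by
  have h1 := h.1 0 (left_mem_Icc.2 hL.le)
  rw [h.2.2.2, hasDerivWithinAt_iff_tendsto_slope, Icc_sdiff_left] at h1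
  have h2 : ∀ᶠ x in 𝓝[Ioc 0 L] (0 : ℝ), 0 < slope v 0 x := h1.eventually (lt_mem_nhds one_pos)
  rw [nhdsWithin_Ioc_eq_nhdsGT hL] at h2
  obtain ⟨e, he, h3⟩ := (mem_nhdsGT_iff_exists_Ioo_subset' hL).1 h2
  refine ⟨min e L, ⟨lt_min he hL, min_le_right _ _⟩, fun x hx => ?_⟩
  have h4 : 0 < slope v 0 x := h3 ⟨hx.1, hx.2.trans_le (min_le_left _ _)⟩
  rw [slope_def_field, h.2.2.1, sub_zero, sub_zero] at h4
  exact (div_pos_iff_of_pos_right hx.1).1 h4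

/-- Derivative of the Wronskian of `tanh` (the solution for `λ = 0`) and `v`. -/
lemma hasDerivAt_wronskian_tanh (h : IVPOdd L lam v v') {x : ℝ} (hx : x ∈ Ioo 0 L) :
    HasDerivAt (fun x => Real.sinh x / Real.cosh x * v' x - 1 / Real.cosh x ^ 2 * v x)
      (lam * Real.sinh x * Real.cosh x * v x) x := by
  have hc : Real.cosh x ≠ 0 := (Real.cosh_pos x).ne'
  have h1 := (((Real.hasDerivAt_sinh x).div (Real.hasDerivAt_cosh x) hc).mul (h.hasDerivAt' hx)).sub
    (((hasDerivAt_const x (1 : ℝ)).div ((Real.hasDerivAt_cosh x).pow 2)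
      (pow_ne_zero 2 hc)).mul (h.hasDerivAt hx))
  refine h1.congr_deriv ?_
  have h2 := Real.cosh_sq x
  simp only [Pi.pow_apply, Pi.div_apply]
  field_simp
  simp only [Nat.cast_ofNat]
  linear_combination (v' x * Real.cosh x ^2) * h2

lemma continuousOn_wronskian_tanh (h : IVPOdd L lam v v') :
    ContinuousOn (fun x => Real.sinh x / Real.cosh x * v' x - 1 / Real.cosh x ^ 2 * v x)
      (Icc 0 L) := by
  have hc : ∀ x ∈ Icc (0 : ℝ) L, Real.cosh x ≠ 0 := fun x _ => (Real.cosh_pos x).ne'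
  have hc2 : ∀ x ∈ Icc (0 : ℝ) L, Real.cosh x ^ 2 ≠ 0 := fun x _ => (pow_pos (Real.cosh_pos x) 2).ne'
  exact ((Real.continuous_sinh.continuousOn.div Real.continuous_cosh.continuousOn hc).mul
    h.continuousOn').sub ((continuousOn_const.div (by fun_prop) hc2).mul h.continuousOn)

/-- Comparison with `tanh`: for `λ ≥ 0` the quotient `v / tanh` is nondecreasing as long as `v`
stays positive, so `v` has no zero in `(0, L]`. -/
lemma pos (hlam : 0 ≤ lam) (h : IVPOdd L lam v v') :
    ∀ x ∈ Ioc 0 L, 0 < v x := by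
  by_contra! hne
  obtain ⟨y, hy, hvy⟩ := hne
  have hL : 0 < L := hy.1.trans_le hy.2
  obtain ⟨e, he, hpos⟩ := h.exists_pos_near_zero hL
  -- the first zero is the least element of the compact set `Z`, which stays away from `0`
  let Z : Set ℝ := {x | x ∈ Icc e L ∧ v x ≤ 0}
  have hZc : IsCompact Z := by
    have : Z = Icc e L ∩ v ⁻¹' Iic 0 := rfl
    refine isCompact_Icc.of_isClosed_subset ?_ (fun x hx => hx.1)
    rw [this]
    exact (h.continuousOn.mono (Icc_subset_Icc_left he.1.le)).preimage_isClosed_of_isClosed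
      isClosed_Icc isClosed_Iic
  have hyZ : y ∈ Z := by
    refine ⟨⟨?_, hy.2⟩, hvy⟩
    by_contra! hlt
    exact absurd (hpos y ⟨hy.1, hlt⟩) (not_lt.2 hvy)
  obtain ⟨z, hz, hmin⟩ := hZc.exists_isLeast ⟨y, hyZ⟩
  have hz0 : 0 < z := he.1.trans_le hz.1.1
  have hzL : z ≤ L := hz.1.2
  have hvpos : ∀ x ∈ Ioo 0 z, 0 < v x := by
    intro x hx
    by_contra! hle
    rcases lt_or_ge x e with hxe | hxe
    · exact absurd (hpos x ⟨hx.1, hxe⟩) (not_lt.2 hle)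
    · exact absurd (hmin ⟨⟨hxe, hx.2.le.trans hzL⟩, hle⟩) (not_le.2 hx.2)
  have hW : ∀ x ∈ Ioo 0 z,
      0 ≤ Real.sinh x / Real.cosh x * v' x - 1 / Real.cosh x ^ 2 * v x := by
    intro x hx
    have hxL : x < L := hx.2.trans_le hzL
    have := le_of_hasDerivAt_nonneg hx.1.le
      (h.continuousOn_wronskian_tanh.mono (Icc_subset_Icc_right hxL.le))
      (fun t ht => h.hasDerivAt_wronskian_tanh ⟨ht.1, ht.2.trans hxL⟩)
      (fun t ht => mul_nonneg (mul_nonneg (mul_nonneg hlam (Real.sinh_pos_iff.2 ht.1).le)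
        (Real.cosh_pos t).le) (hvpos t ⟨ht.1, ht.2.trans hx.2⟩).le)
    simpa [h.2.2.1] using this
  -- `v / tanh` is positive at `z / 2` and nonpositive at `z`, yet does not decrease in between
  have hz2 : 0 < z / 2 := by linarith
  have hquot := le_of_hasDerivAt_nonneg (a := z / 2) (b := z) (by linarith)
    (f := fun x => v x / (Real.sinh x / Real.cosh x))
    (f' := fun x => (Real.sinh x / Real.cosh x * v' x - 1 / Real.cosh x ^ 2 * v x) /
      (Real.sinh x / Real.cosh x) ^ 2)
    ((h.continuousOn.mono (Icc_subset_Icc hz2.le hzL)).div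
      (Real.continuous_sinh.continuousOn.div Real.continuous_cosh.continuousOn
        fun x _ => (Real.cosh_pos x).ne')
      (fun x hx => (div_pos (Real.sinh_pos_iff.2 (hz2.trans_le hx.1)) (Real.cosh_pos x)).ne'))
    (fun x hx => by
      have hx0 : 0 < x := hz2.trans hx.1
      have hc : Real.cosh x ≠ 0 := (Real.cosh_pos x).ne'
      have hs : Real.sinh x ≠ 0 := (Real.sinh_pos_iff.2 hx0).ne'
      refine ((h.hasDerivAt ⟨hx0, hx.2.trans_le hzL⟩).div
        ((Real.hasDerivAt_sinh x).div (Real.hasDerivAt_cosh x) hc) (div_ne_zero hs hc)).congr_deriv ?_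
      have h2 := Real.cosh_sq x
      simp only [Pi.div_apply]
      field_simp
      linear_combination (-v x) * h2)
    (fun x hx => div_nonneg (hW x ⟨hz2.trans hx.1, hx.2⟩) (sq_nonneg _))
  have h1 : 0 < v (z / 2) / (Real.sinh (z / 2) / Real.cosh (z / 2)) :=
    div_pos (hvpos _ ⟨hz2, by linarith⟩) (div_pos (Real.sinh_pos_iff.2 hz2) (Real.cosh_pos _))
  have h2 : v z / (Real.sinh z / Real.cosh z) ≤ 0 :=
    div_nonpos_of_nonpos_of_nonneg hz.2
      (div_pos (Real.sinh_pos_iff.2 hz0) (Real.cosh_pos _)).le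
  exact absurd (h1.trans_le hquot) (not_lt.2 h2)

/-- For `λ = 0` the Wronskian with `tanh` vanishes, i.e. `v' / v = tanh' / tanh`. -/
lemma wronskian_tanh_eq_zero (hL : 0 < L) (h : IVPOdd L 0 v v') :
    Real.sinh L / Real.cosh L * v' L - 1 / Real.cosh L ^ 2 * v L = 0 := by
  have h1 := le_of_hasDerivAt_nonneg hL.le h.continuousOn_wronskian_tanh
    (fun t ht => h.hasDerivAt_wronskian_tanh ht) (fun t _ => by simp)
  have h2 := le_of_hasDerivAt_nonneg hL.le h.continuousOn_wronskian_tanh.neg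
    (fun t ht => (h.hasDerivAt_wronskian_tanh ht).neg) (fun t _ => by simp)
  simp [h.2.2.1] at h1 h2
  simp
  linarith

/-- For `λ = 3` the function `sinh` is a subsolution, since `3 cosh² - 2 / cosh² ≥ 1`; hence
`v' / v ≥ cosh / sinh` at `L`. -/
lemma wronskian_sinh_nonneg (hL : 0 < L) (h : IVPOdd L 3 v v') :
    0 ≤ Real.sinh L * v' L - Real.cosh L * v L := by
  have h1 := le_of_hasDerivAt_nonneg hL.le
    (f := fun x => Real.sinh x * v' x - Real.cosh x * v x)
    (f' := fun x => (3 * Real.cosh x ^ 2 - 2 / Real.cosh x ^ 2 - 1) * (Real.sinh x * v x))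
    ((Real.continuous_sinh.continuousOn.mul h.continuousOn').sub
      (Real.continuous_cosh.continuousOn.mul h.continuousOn))
    (fun x hx => (((Real.hasDerivAt_sinh x).mul (h.hasDerivAt' hx)).sub
      ((Real.hasDerivAt_cosh x).mul (h.hasDerivAt hx))).congr_deriv (by ring))
    (fun x hx => by
      have hv := h.pos (by norm_num) x ⟨hx.1, hx.2.le⟩
      refine mul_nonneg ?_ (mul_pos (Real.sinh_pos_iff.2 hx.1) hv).le
      have hc : 1 ≤ Real.cosh x ^ 2 := one_le_pow₀ (Real.one_le_cosh x)
      have : 2 / Real.cosh x ^ 2 ≤ 2 := div_le_self (by norm_num) hc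
      linarith)
  simpa [h.2.2.1] using h1

/-- Two solutions with different nonnegative parameters cannot share the Robin condition at `L`:
their Wronskian is strictly increasing but vanishes at both ends. -/
lemma false_of_lt {mu : ℝ} {w w' : ℝ → ℝ} (hL : 0 < L) (hlam : 0 ≤ lam) (hlt : lam < mu)
    (h : IVPOdd L lam v v') (hR : v L = L * v' L)
    (k : IVPOdd L mu w w') (kR : w L = L * w' L) : False := by
  have h1 := lt_of_hasDerivAt_pos hL
    (f := fun x => v x * w' x - v' x * w x)
    (f' := fun x => (mu - lam) * Real.cosh x ^ 2 * (v x * w x))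
    ((h.continuousOn.mul k.continuousOn').sub (h.continuousOn'.mul k.continuousOn))
    (fun x hx => (((h.hasDerivAt hx).mul (k.hasDerivAt' hx)).sub
      ((h.hasDerivAt' hx).mul (k.hasDerivAt hx))).congr_deriv (by ring))
    (fun x hx => by
      have hv := h.pos hlam x ⟨hx.1, hx.2.le⟩
      have hw := k.pos (hlam.trans hlt.le) x ⟨hx.1, hx.2.le⟩
      have hc := Real.cosh_pos x
      have := sub_pos.2 hlt
      positivity)
  simp only [h.2.2.1, k.2.2.1, hR, kR] at h1
  linarith

end IVPOdd

/-! ### Existence and continuous dependence on the parameter -/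

section

variable {E F : Type*} [NormedAddCommGroup E] [NormedSpace ℝ E] [NormedAddCommGroup F]
  [NormedSpace ℝ F] {f : ℝ → E × F} {f' : E × F} {s : Set ℝ} {x : ℝ}

lemma hasDerivWithinAt_fst (h : HasDerivWithinAt f f' s x) :
    HasDerivWithinAt (fun t => (f t).1) f'.1 s x := by
  simpa using h.hasFDerivWithinAt.fst.hasDerivWithinAt

lemma hasDerivWithinAt_snd (h : HasDerivWithinAt f f' s x) :
    HasDerivWithinAt (fun t => (f t).2) f'.2 s x := by
  simpa using h.hasFDerivWithinAt.snd.hasDerivWithinAt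

end

/-- Truncation of a real number to `[-R, R]`. -/
noncomputable def clip (R x : ℝ) : ℝ := max (-R) (min R x)

lemma abs_clip_sub_clip (R x y : ℝ) : |clip R x - clip R y| ≤ |x - y| := by
  unfold clip
  rw [max_comm (-R), max_comm (-R), min_comm R, min_comm R]
  exact (abs_max_sub_max_le_abs _ _ _).trans
    ((abs_min_sub_min_le_max _ _ _ _).trans (by simp))

lemma abs_clip_le {R : ℝ} (hR : 0 ≤ R) (x : ℝ) : |clip R x| ≤ R := by
  unfold clip
  rw [abs_le]
  exact ⟨le_max_left _ _, max_le (by linarith) (min_le_left _ _)⟩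

lemma clip_of_abs_le {R x : ℝ} (h : |x| ≤ R) : clip R x = x := by
  unfold clip
  rw [min_eq_right (abs_le.1 h).2, max_eq_right (abs_le.1 h).1]

lemma abs_clip_le_abs {R : ℝ} (hR : 0 ≤ R) (x : ℝ) : |clip R x| ≤ |x| := by
  simpa [clip_of_abs_le (show |(0 : ℝ)| ≤ R by simpa)] using abs_clip_sub_clip R x 0

/-- The first-order system for `(λ, v, v')`, with the parameter `λ` treated as a constant
component of the state, truncated to be bounded and globally Lipschitz. -/
noncomputable def truncField (R t : ℝ) (z : ℝ × ℝ × ℝ) : ℝ × ℝ × ℝ :=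
  (0, clip R z.2.2,
    (clip 3 z.1 * Real.cosh t ^ 2 - 2 / Real.cosh t ^ 2) * clip R z.2.1)

section

variable {L t : ℝ}

open Set

lemma cosh_sq_le (ht : t ∈ Icc 0 L) : Real.cosh t ^ 2 ≤ Real.cosh L ^ 2 := by
  have : Real.cosh t ≤ Real.cosh L := by
    rw [Real.cosh_le_cosh, abs_of_nonneg ht.1, abs_of_nonneg (ht.1.trans ht.2)]
    exact ht.2
  have := Real.cosh_pos t
  gcongr

lemma abs_coeff_le (ht : t ∈ Icc 0 L) (s : ℝ) :
    |clip 3 s * Real.cosh t ^ 2 - 2 / Real.cosh t ^ 2| ≤ 3 * Real.cosh L ^ 2 + 2 := by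
  have h1 := cosh_sq_le ht
  have hc : 1 ≤ Real.cosh t ^ 2 := one_le_pow₀ (Real.one_le_cosh t)
  have h2 : 2 / Real.cosh t ^ 2 ≤ 2 := div_le_self (by norm_num) hc
  have h3 : 0 ≤ 2 / Real.cosh t ^ 2 := by positivity
  have h4 := abs_clip_le (show (0 : ℝ) ≤ 3 by norm_num) s
  calc _ ≤ |clip 3 s * Real.cosh t ^ 2| + |2 / Real.cosh t ^ 2| := abs_sub _ _
    _ = |clip 3 s| * Real.cosh t ^ 2 + 2 / Real.cosh t ^ 2 := by
      rw [abs_mul, abs_of_nonneg h3, abs_of_nonneg (by positivity : 0 ≤ Real.cosh t ^ 2)]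
    _ ≤ 3 * Real.cosh L ^ 2 + 2 := by gcongr

lemma norm_truncField_le {R : ℝ} (hR : 0 ≤ R) (ht : t ∈ Icc 0 L) (z : ℝ × ℝ × ℝ) :
    ‖truncField R t z‖ ≤ (3 * Real.cosh L ^ 2 + 2) * R := by
  have h1 := abs_coeff_le ht z.1
  have hC : 1 ≤ 3 * Real.cosh L ^ 2 + 2 := by nlinarith [sq_nonneg (Real.cosh L)]
  simp only [truncField, Prod.norm_def, Real.norm_eq_abs, abs_zero, abs_mul]
  refine max_le (by positivity) (max_le ?_ ?_)
  · exact (abs_clip_le hR _).trans (le_mul_of_one_le_left hR hC)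
  · gcongr
    exact abs_clip_le hR _

lemma lipschitz_truncField {R : ℝ} (hR : 0 ≤ R) (ht : t ∈ Icc 0 L) (z y : ℝ × ℝ × ℝ) :
    ‖truncField R t z - truncField R t y‖ ≤
      (3 * Real.cosh L ^ 2 + 2 + Real.cosh L ^ 2 * R) * ‖z - y‖ := by
  have h1 := abs_coeff_le ht z.1
  have hq := cosh_sq_le ht
  have hn1 : |z.1 - y.1| ≤ ‖z - y‖ := norm_fst_le (z - y)
  have hn2 : |z.2.1 - y.2.1| ≤ ‖z - y‖ := (norm_fst_le (z - y).2).trans (norm_snd_le (z - y))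
  have hn3 : |z.2.2 - y.2.2| ≤ ‖z - y‖ := (norm_snd_le (z - y).2).trans (norm_snd_le (z - y))
  have hC : 1 ≤ 3 * Real.cosh L ^ 2 + 2 + Real.cosh L ^ 2 * R := by
    have : 0 ≤ Real.cosh L ^ 2 * R := by positivity
    nlinarith [sq_nonneg (Real.cosh L)]
  simp only [truncField]
  rw [Prod.norm_def, Prod.norm_def]
  simp only [Prod.fst_sub, Prod.snd_sub, Real.norm_eq_abs, sub_self, abs_zero]
  refine max_le (by positivity) (max_le ?_ ?_)
  · exact ((abs_clip_sub_clip _ _ _).trans hn3).trans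
      (le_mul_of_one_le_left (norm_nonneg _) hC)
  · set p := 2 / Real.cosh t ^ 2
    set q := Real.cosh t ^ 2
    have hq0 : 0 ≤ q := by positivity
    calc |(clip 3 z.1 * q - p) * clip R z.2.1 - (clip 3 y.1 * q - p) * clip R y.2.1|
        = |(clip 3 z.1 * q - p) * (clip R z.2.1 - clip R y.2.1)
            + (clip 3 z.1 - clip 3 y.1) * q * clip R y.2.1| := by ring_nf
      _ ≤ |clip 3 z.1 * q - p| * |clip R z.2.1 - clip R y.2.1|
            + |clip 3 z.1 - clip 3 y.1| * q * |clip R y.2.1| := by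
          refine (abs_add_le _ _).trans_eq ?_
          rw [abs_mul, abs_mul, abs_mul, abs_of_nonneg hq0]
      _ ≤ (3 * Real.cosh L ^ 2 + 2) * ‖z - y‖ + ‖z - y‖ * Real.cosh L ^ 2 * R := by
          gcongr
          · exact (abs_clip_sub_clip _ _ _).trans hn2
          · exact (abs_clip_sub_clip _ _ _).trans hn1
          · exact abs_clip_le hR _
      _ = _ := by ring

/-- The truncated system satisfies the Picard-Lindelöf hypotheses on all of `[0, L]`, since its
field is bounded. The ball of initial data contains `(λ, 0, 1)` for every `λ ∈ [0, 3]`. -/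
lemma isPicardLindelof_truncField (hL : 0 ≤ L) {R : ℝ} (hR : 0 ≤ R) :
    IsPicardLindelof (truncField R) (tmin := 0) (tmax := L) ⟨0, left_mem_Icc.2 hL⟩
      ((3 / 2, 0, 1) : ℝ × ℝ × ℝ)
      (Real.toNNReal ((3 * Real.cosh L ^ 2 + 2) * R * L + 3 / 2)) (Real.toNNReal (3 / 2))
      (Real.toNNReal ((3 * Real.cosh L ^ 2 + 2) * R))
      (Real.toNNReal (3 * Real.cosh L ^ 2 + 2 + Real.cosh L ^ 2 * R)) where
  lipschitzOnWith t ht := LipschitzOnWith.of_dist_le_mul fun z _ y _ => by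
    rw [dist_eq_norm, dist_eq_norm, Real.coe_toNNReal _ (by positivity)]
    exact lipschitz_truncField hR ht z y
  continuousOn z _ := by
    have hc : ∀ t : ℝ, Real.cosh t ^ 2 ≠ 0 := fun t => (pow_pos (Real.cosh_pos t) 2).ne'
    unfold truncField
    exact (continuous_const.prodMk (continuous_const.prodMk
      (((continuous_const.mul (Real.continuous_cosh.pow 2)).sub
        (continuous_const.div (Real.continuous_cosh.pow 2) hc)).mul
          continuous_const))).continuousOn
  norm_le t ht z _ := by
    rw [Real.coe_toNNReal _ (by positivity)]
    exact norm_truncField_le hR ht z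
  mul_max_le := by
    rw [Real.coe_toNNReal _ (by positivity), Real.coe_toNNReal _ (by positivity),
      Real.coe_toNNReal _ (by positivity)]
    simp [hL]

/-- Existence of solutions on `[0, L]` for `λ ∈ [0, 3]`, with endpoint values depending
continuously on `λ`. -/
lemma exists_solutions (hL : 0 < L) :
    ∃ V V' : ℝ → ℝ → ℝ, (∀ lam ∈ Icc (0 : ℝ) 3, IVPOdd L lam (V lam) (V' lam)) ∧
      ContinuousOn (fun lam => V lam L) (Icc 0 3) ∧
      ContinuousOn (fun lam => V' lam L) (Icc 0 3) := by
  set C : ℝ := 3 * Real.cosh L ^ 2 + 2 with hC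
  have hC1 : 1 ≤ C := by nlinarith [sq_nonneg (Real.cosh L)]
  -- Grönwall's bound for solutions of the truncated system, so that truncation is never active
  set R : ℝ := Real.exp (C * L) with hRdef
  have hR : 0 ≤ R := (Real.exp_pos _).le
  obtain ⟨α, hα, K, hK⟩ :=
    (isPicardLindelof_truncField hL.le
      hR).exists_forall_mem_closedBall_eq_hasDerivWithinAt_lipschitzOnWith
  have hball : ∀ lam ∈ Icc (0 : ℝ) 3, ((lam, 0, 1) : ℝ × ℝ × ℝ) ∈
      Metric.closedBall ((3 / 2, 0, 1) : ℝ × ℝ × ℝ) (Real.toNNReal (3 / 2)) := by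
    intro lam hlam
    rw [Real.coe_toNNReal _ (by positivity), mem_closedBall_iff_norm, Prod.norm_def]
    simp only [sub_self, Prod.mk_sub_mk, norm_zero, Real.norm_eq_abs]
    refine max_le (abs_le.2 ⟨?_, ?_⟩) (by norm_num)
    · linarith [hlam.1]
    · linarith [hlam.2]
  have hcont : ContinuousOn (fun lam : ℝ => α (lam, 0, 1) L) (Icc 0 3) :=
    (hK L (right_mem_Icc.2 hL.le)).continuousOn.comp (by fun_prop) hball
  refine ⟨fun lam t => (α (lam, 0, 1) t).2.1, fun lam t => (α (lam, 0, 1) t).2.2, ?_,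
    hcont.snd.fst, hcont.snd.snd⟩
  intro lam hlam
  obtain ⟨h0, hd⟩ := hα _ (hball lam hlam)
  simp only at h0
  have hd1 := fun t ht => hasDerivWithinAt_fst (hd t ht)
  have hd2 := fun t ht => hasDerivWithinAt_snd (hd t ht)
  have hc1 : ∀ t ∈ Icc 0 L, (α (lam, 0, 1) t).1 = lam := by
    intro t ht
    have := constant_of_has_deriv_right_zero (f := fun t => (α (lam, 0, 1) t).1) (a := 0) (b := L)
      (fun t ht => (hd1 t ht).continuousWithinAt)
      (fun t ht => ((hd1 t (Ico_subset_Icc_self ht)).mono_of_mem_nhdsWithin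
        (Icc_mem_nhdsGE_of_mem ht))) t ht
    rw [this, h0]
  have hbound : ∀ t ∈ Icc 0 L, ‖(α (lam, 0, 1) t).2‖ ≤ R := by
    intro t ht
    have := norm_le_gronwallBound_of_norm_deriv_right_le
      (f := fun t => (α (lam, 0, 1) t).2) (δ := 1) (K := C) (ε := 0) (a := 0) (b := L)
      (fun t ht => (hd2 t ht).continuousWithinAt)
      (fun t ht => ((hd2 t (Ico_subset_Icc_self ht)).mono_of_mem_nhdsWithin
        (Icc_mem_nhdsGE_of_mem ht))) (by simp [h0, Prod.norm_def]) ?_ t ht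
    · refine this.trans ?_
      rw [gronwallBound_ε0, one_mul, sub_zero]
      have := ht.2
      exact Real.exp_le_exp.2 (by gcongr)
    · intro t ht
      have ht' := Ico_subset_Icc_self ht
      have h1 := abs_coeff_le ht' (α (lam, 0, 1) t).1
      simp only [truncField]
      rw [Prod.norm_def, add_zero]
      simp only [Real.norm_eq_abs, abs_mul]
      refine max_le ?_ ?_
      · exact ((abs_clip_le_abs hR _).trans (norm_snd_le (α (lam, 0, 1) t).2)).trans
          (le_mul_of_one_le_left (norm_nonneg _) hC1)
      · gcongr
        exact (abs_clip_le_abs hR _).trans (norm_fst_le (α (lam, 0, 1) t).2)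
  refine ⟨fun t ht => ?_, fun t ht => ?_, ?_, ?_⟩
  · refine (hasDerivWithinAt_fst (hd2 t ht)).congr_deriv ?_
    exact clip_of_abs_le ((norm_snd_le (α (lam, 0, 1) t).2).trans (hbound t ht))
  · refine (hasDerivWithinAt_snd (hd2 t ht)).congr_deriv ?_
    have h1 : clip R (α (lam, 0, 1) t).2.1 = (α (lam, 0, 1) t).2.1 :=
      clip_of_abs_le ((norm_fst_le (α (lam, 0, 1) t).2).trans (hbound t ht))
    have h2 : clip 3 lam = lam := clip_of_abs_le (abs_le.2 ⟨by linarith [hlam.1], hlam.2⟩)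
    simp only [truncField, hc1 t ht, h1, h2]
  · simp [h0]
  · simp [h0]

end

/-! ### The length `L` -/

section

variable {L : ℝ}

lemma one_lt_of_mul_tanh (hL : 0 < L) (hL1 : L * Real.tanh L = 1) : 1 < L := by
  nlinarith [Real.tanh_lt_one L]

lemma cosh_eq_mul_sinh (hL1 : L * Real.tanh L = 1) : Real.cosh L = L * Real.sinh L := by
  have hc := Real.cosh_pos L
  rw [Real.tanh_eq_sinh_div_cosh] at hL1
  field_simp at hL1
  linarith

/-- If `L² ≥ 2`, then `cosh² L = L² / (L² - 1) ≤ 2`, against `cosh L ≥ 1 + L² / 2 ≥ 2`. -/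
lemma sq_lt_two (hL : 0 < L) (hL1 : L * Real.tanh L = 1) : L ^ 2 < 2 := by
  by_contra! hge
  have h1 := cosh_eq_mul_sinh hL1
  have h2 := Real.cosh_sq L
  have h3 : L / 2 ≤ Real.sinh (L / 2) := Real.self_le_sinh_iff.2 (by linarith)
  have h4 : Real.cosh L = 2 * Real.sinh (L / 2) ^ 2 + 1 := by
    have h5 := Real.cosh_two_mul (L / 2)
    rw [Real.cosh_sq, mul_div_cancel₀ L two_ne_zero] at h5
    linarith
  have h6 : 2 ≤ Real.cosh L := by nlinarith
  have h7 : Real.cosh L ^ 2 = L ^ 2 * Real.sinh L ^ 2 := by rw [h1]; ring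
  nlinarith [sq_nonneg (Real.sinh L)]

end

/-- There is a unique `λ > 0` for which the odd solution of
`v'' = (λ cosh²x − 2/cosh²x) v`, `v 0 = 0`, `v' 0 = 1` satisfies `v L = L·v' L`;
moreover it satisfies `λ < 3`. Here `L` is the unique positive real with `L·tanh L = 1`. -/
theorem unique_odd_eigenvalue_mode_zero
    (L : ℝ) (hL : 0 < L) (hL1 : L * Real.tanh L = 1) :
    ∃ lam : ℝ, (0 < lam ∧ lam < 3 ∧
        ∃ v v' : ℝ → ℝ, IVPOdd L lam v v' ∧ v L = L * v' L) ∧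
      ∀ mu : ℝ, 0 < mu →
        (∃ v v' : ℝ → ℝ, IVPOdd L mu v v' ∧ v L = L * v' L) → mu = lam := by
  obtain ⟨V, V', hsol, hV, hV'⟩ := exists_solutions hL
  have hs : 0 < Real.sinh L := Real.sinh_pos_iff.2 hL
  have hcs := cosh_eq_mul_sinh hL1
  have h0 : 0 < V 0 L - L * V' 0 L := by
    have h := hsol 0 (by simp)
    have hv := h.pos le_rfl L (Set.right_mem_Ioc.2 hL)
    have hW := h.wronskian_tanh_eq_zero hL
    have hsq := Real.cosh_sq L
    have hlt := sq_lt_two hL hL1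
    -- with `cosh L = L sinh L` the Wronskian identity says `L v' = (L² - 1) v`
    have h1 : L * V' 0 L = (L ^ 2 - 1) * V 0 L := by
      have h2 : (L ^ 2 - 1) * Real.sinh L ^ 2 = 1 := by rw [hcs] at hsq; linarith
      rw [hcs] at hW
      field_simp at hW
      have h3 : Real.sinh L ^ 2 * (L * V' 0 L) = V 0 L := by linarith
      calc L * V' 0 L = (L ^ 2 - 1) * Real.sinh L ^ 2 * (L * V' 0 L) := by rw [h2, one_mul]
        _ = _ := by rw [mul_assoc, h3]
    rw [h1]
    nlinarith
  have h3 : V 3 L - L * V' 3 L < 0 := by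
    have h := hsol 3 (by simp)
    have hv := h.pos (by norm_num) L (Set.right_mem_Ioc.2 hL)
    have hW := h.wronskian_sinh_nonneg hL
    have h1 := one_lt_of_mul_tanh hL hL1
    have h2 : L * V 3 L ≤ V' 3 L := by
      rw [hcs] at hW
      refine le_of_mul_le_mul_left ?_ hs
      linarith
    have h4 := mul_le_mul_of_nonneg_left h2 hL.le
    have h5 : V 3 L < L * (L * V 3 L) := by nlinarith [mul_pos hv hL]
    linarith
  obtain ⟨lam, hlam, hz⟩ := intermediate_value_Ioo' (show (0 : ℝ) ≤ 3 by norm_num)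
    (hV.sub (hV'.const_smul L)) (show (0 : ℝ) ∈ Set.Ioo _ _ from ⟨h3, h0⟩)
  have hsl := hsol lam (Set.Ioo_subset_Icc_self hlam)
  have hRl : V lam L = L * V' lam L := sub_eq_zero.1 hz
  refine ⟨lam, ⟨hlam.1, hlam.2, V lam, V' lam, hsl, hRl⟩, ?_⟩
  rintro mu hmu ⟨w, w', hw, hRw⟩
  rcases lt_trichotomy mu lam with hlt | heq | hgt
  · exact (hw.false_of_lt hL hmu.le hlt hRw hsl hRl).elim
  · exact heq
  · exact (hsl.false_of_lt hL hlam.1.le hgt hRl hw hRw).elim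
end

section
/- There exists a unique λ > 0 such that the solution w : [0, L] → ℝ of the initial value problem w''(x) = (1 + λ·cosh²(x) − 2/cosh²(x))·w(x), w(0) = 1, w'(0) = 0 satisfies w(L) = L·w'(L); moreover this λ satisfies λ < 2. -/
/-!
Write `c = cosh`. At `λ = 0` the even solution is `1 / c`, so one substitutes `w = u / c`. With
`p = u' / c²` the equation becomes the first-order system `u' = c² p`, `p' = λ u`, with `u 0 = 1`,
`p 0 = 0`.

*Existence and continuous dependence.* The Picard iterates of the system give
`u = ∑ λⁿ g₂ₙ`, `p = ∑ λⁿ⁺¹ g₂ₙ₊₁`, where the `gₖ` (`picardTerm`) are iterated integrals that do not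
depend on `λ` and satisfy `|gₖ x| ≤ Cᵏ |x|ᵏ / k!` (`abs_picardTerm_le`). The series may be
differentiated term by term (`hasDerivAt_solU`, `hasDerivAt_solP`), and at `x = L` they are
continuous in `λ ∈ [0, 2]`.

*Positivity.* For `λ ≥ 0`, `(u p)' = c² p² + λ u² ≥ 0`, hence `(u²)' = 2 c² u p ≥ 0` and
`u² ≥ 1`. So `u`, and with it every solution `w`, stays positive (`IVPEvenModeOne.pos`).

*Location of the eigenvalue.* Let `F λ = L w' L - w L`. Then `F 0 < 0` because `w = 1 / c`. At `λ = 2`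
the Wronskian `w' c - w c'` has derivative `(2c² - 2/c²) w c > 0` on `(0, L)`, so
`w' L / w L > tanh L = 1 / L` and `F 2 > 0` (`boundary_pos_at_two`). The intermediate value theorem
gives a zero in `(0, 2)`.

*Uniqueness.* For `λ < μ` the Wronskian `w_μ' w_λ - w_μ w_λ'` has derivative
`(μ - λ) c² w_μ w_λ > 0`, so it cannot vanish at `L`, whereas it would if both solutions satisfied
the boundary condition (`not_both_boundary`).
-/

/-- `w` (with derivative `w'`) solves `w'' = (1 + λ cosh²x − 2/cosh²x) w` on `[0, L]`
with `w 0 = 1`, `w' 0 = 0`. -/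
def IVPEvenModeOne (L lam : ℝ) (w w' : ℝ → ℝ) : Prop :=
  (∀ x ∈ Set.Icc 0 L, HasDerivWithinAt w (w' x) (Set.Icc 0 L) x) ∧
  (∀ x ∈ Set.Icc 0 L, HasDerivWithinAt w'
    ((1 + lam * Real.cosh x ^ 2 - 2 / Real.cosh x ^ 2) * w x) (Set.Icc 0 L) x) ∧
  w 0 = 1 ∧ w' 0 = 0

/-! ### Power series in the parameter -/

/-- The iterated integrals `g₀ = 1`, `gₖ₊₁ x = ∫₀ˣ qₖ gₖ`, where `qₖ = 1` for even `k` and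
`qₖ = cosh²` for odd `k`. -/
noncomputable def picardTerm : ℕ → ℝ → ℝ
  | 0, _ => 1
  | k + 1, x => ∫ t in (0 : ℝ)..x, (if Even k then 1 else Real.cosh t ^ 2) * picardTerm k t

theorem continuous_weight (k : ℕ) :
    Continuous fun t : ℝ => (if Even k then (1 : ℝ) else Real.cosh t ^ 2) := by
  split_ifs
  · exact continuous_const
  · exact Real.continuous_cosh.pow 2

theorem continuous_picardTerm (k : ℕ) : Continuous (picardTerm k) := by
  induction k with
  | zero => exact continuous_const
  | succ k ih =>
    exact intervalIntegral.continuous_primitive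
      (fun a b => ((continuous_weight k).mul ih).intervalIntegrable a b) 0

theorem hasDerivAt_picardTerm (k : ℕ) (x : ℝ) :
    HasDerivAt (picardTerm (k + 1))
      ((if Even k then 1 else Real.cosh x ^ 2) * picardTerm k x) x := by
  have h := (continuous_weight k).mul (continuous_picardTerm k)
  exact intervalIntegral.integral_hasDerivAt_right (h.intervalIntegrable 0 x)
    (h.stronglyMeasurableAtFilter _ _) h.continuousAt

theorem hasDerivAt_picardTerm_odd (n : ℕ) (x : ℝ) :
    HasDerivAt (picardTerm (2 * n + 1)) (picardTerm (2 * n) x) x := by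
  simpa using hasDerivAt_picardTerm (2 * n) x

theorem hasDerivAt_picardTerm_even (n : ℕ) (x : ℝ) :
    HasDerivAt (picardTerm (2 * n + 2)) (Real.cosh x ^ 2 * picardTerm (2 * n + 1) x) x := by
  have h := hasDerivAt_picardTerm (2 * n + 1) x
  have h1 : ¬ Even (2 * n + 1) := by simp
  rwa [if_neg h1] at h

theorem picardTerm_succ_zero (k : ℕ) : picardTerm (k + 1) 0 = 0 := by
  simp [picardTerm]

theorem abs_integral_le_of_nonneg {f : ℝ → ℝ} {K M : ℝ} {n : ℕ}
    (h : ∀ t, |t| ≤ M → |f t| ≤ K * |t| ^ n / n.factorial) {x : ℝ} (hx : |x| ≤ M) (h0 : 0 ≤ x) :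
    |∫ t in (0 : ℝ)..x, f t| ≤ K * |x| ^ (n + 1) / (n + 1).factorial := by
  have hb : ‖∫ t in (0 : ℝ)..x, f t‖ ≤ ∫ t in (0 : ℝ)..x, K / n.factorial * t ^ n := by
    refine intervalIntegral.norm_integral_le_of_norm_le h0 (Filter.Eventually.of_forall ?_)
      (Continuous.intervalIntegrable (by fun_prop) _ _)
    intro t ht
    have h1 := h t (by rw [abs_of_pos ht.1]; rw [abs_of_nonneg h0] at hx; exact ht.2.trans hx)
    rw [abs_of_pos ht.1] at h1
    rw [Real.norm_eq_abs]
    calc |f t| ≤ _ := h1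
      _ = _ := by ring
  rw [Real.norm_eq_abs] at hb
  refine hb.trans (le_of_eq ?_)
  rw [intervalIntegral.integral_const_mul, integral_pow, abs_of_nonneg h0, Nat.factorial_succ]
  have : (n.factorial : ℝ) ≠ 0 := by positivity
  push_cast
  field_simp
  simp

theorem abs_integral_le_pow {f : ℝ → ℝ} {K M : ℝ} {n : ℕ}
    (h : ∀ t, |t| ≤ M → |f t| ≤ K * |t| ^ n / n.factorial) {x : ℝ} (hx : |x| ≤ M) :
    |∫ t in (0 : ℝ)..x, f t| ≤ K * |x| ^ (n + 1) / (n + 1).factorial := by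
  rcases le_total 0 x with h0 | h0
  · exact abs_integral_le_of_nonneg h hx h0
  · have h1 := abs_integral_le_of_nonneg (f := fun t => f (-t)) (x := -x)
      (fun t ht => by simpa using h (-t) (by simpa using ht)) (by simpa using hx) (by linarith)
    rw [intervalIntegral.integral_comp_neg, intervalIntegral.integral_symm] at h1
    simpa using h1

theorem abs_picardTerm_le {M : ℝ} (k : ℕ) {x : ℝ} (hx : |x| ≤ M) :
    |picardTerm k x| ≤ (Real.cosh M ^ 2) ^ k * |x| ^ k / k.factorial := by
  induction k generalizing x with
  | zero => simp [picardTerm]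
  | succ k ih =>
    refine abs_integral_le_pow (M := M) ?_ hx
    intro t ht
    rw [abs_mul, pow_succ' (Real.cosh M ^ 2) k, mul_assoc, mul_div_assoc]
    refine mul_le_mul ?_ (ih ht) (abs_nonneg _) (by positivity)
    have hM : (1 : ℝ) ≤ Real.cosh M ^ 2 := one_le_pow₀ (Real.one_le_cosh M)
    split_ifs
    · simpa using hM
    · rw [abs_of_nonneg (by positivity)]
      have : Real.cosh t ≤ Real.cosh M := Real.cosh_le_cosh.2 (ht.trans (le_abs_self M))
      have := (Real.cosh_pos t).le
      gcongr

/-- The majorant of the Picard series on `|x| ≤ M`, `|λ| ≤ 2`; the factor `2ᵏ` absorbs the powers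
of `λ`. -/
noncomputable def majorant (M : ℝ) (k : ℕ) : ℝ := (2 * (Real.cosh M ^ 2 * M)) ^ k / k.factorial

theorem summable_majorant_even (M : ℝ) : Summable fun n => majorant M (2 * n) :=
  (Real.summable_pow_div_factorial (2 * (Real.cosh M ^ 2 * M))).comp_injective
    (i := fun n => 2 * n) fun a b h => by simpa using h

theorem summable_majorant_odd (M : ℝ) : Summable fun n => majorant M (2 * n + 1) :=
  (Real.summable_pow_div_factorial (2 * (Real.cosh M ^ 2 * M))).comp_injective
    (i := fun n => 2 * n + 1) fun a b h => by simpa using h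

theorem abs_pow_mul_picardTerm_le {M lam x : ℝ} (hl : |lam| ≤ 2) (hx : |x| ≤ M) {j k : ℕ}
    (hjk : j ≤ k) : |lam ^ j * picardTerm k x| ≤ majorant M k := by
  have hM : 0 ≤ M := (abs_nonneg x).trans hx
  rw [abs_mul, abs_pow, majorant, mul_pow, mul_div_assoc, mul_pow]
  have h1 : |lam| ^ j ≤ 2 ^ k :=
    (pow_le_pow_left₀ (abs_nonneg _) hl j).trans (pow_le_pow_right₀ (by norm_num) hjk)
  have h2 : |picardTerm k x| ≤ (Real.cosh M ^ 2) ^ k * M ^ k / k.factorial :=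
    (abs_picardTerm_le k hx).trans (by gcongr)
  exact mul_le_mul h1 h2 (abs_nonneg _) (by positivity)

/-- The function `u = w cosh`, as a power series in `λ`. -/
noncomputable def solU (lam x : ℝ) : ℝ := 1 + ∑' n : ℕ, lam ^ (n + 1) * picardTerm (2 * n + 2) x

/-- The function `p = u' / cosh²`, as a power series in `λ`. -/
noncomputable def solP (lam x : ℝ) : ℝ := ∑' n : ℕ, lam ^ (n + 1) * picardTerm (2 * n + 1) x

theorem hasDerivAt_solU {lam : ℝ} (hl : |lam| ≤ 2) (x : ℝ) :
    HasDerivAt (solU lam) (Real.cosh x ^ 2 * solP lam x) x := by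
  set M := |x| + 1 with hM
  have hM0 : 0 < M := by positivity
  have hball : ∀ y ∈ Set.Ioo (-M) M, |y| ≤ M := fun y hy => (abs_lt.2 hy).le
  have hxM : x ∈ Set.Ioo (-M) M := abs_lt.1 (by rw [hM]; linarith)
  have h := hasDerivAt_tsum_of_isPreconnected (t := Set.Ioo (-M) M) (y₀ := 0) (y := x)
    (g := fun (n : ℕ) y => lam ^ (n + 1) * picardTerm (2 * n + 2) y)
    (g' := fun (n : ℕ) y => lam ^ (n + 1) * (Real.cosh y ^ 2 * picardTerm (2 * n + 1) y))
    ((summable_majorant_odd M).mul_left (Real.cosh M ^ 2)) isOpen_Ioo isPreconnected_Ioo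
    (fun n y _ => (hasDerivAt_picardTerm_even n y).const_mul _) ?_ ⟨by linarith, hM0⟩ ?_ hxM
  · refine (h.const_add 1).congr_deriv ?_
    rw [solP, ← tsum_mul_left]
    exact tsum_congr fun n => by ring
  · intro n y hy
    rw [Real.norm_eq_abs, mul_left_comm, abs_mul]
    refine mul_le_mul ?_ (abs_pow_mul_picardTerm_le hl (hball y hy) (by omega)) (abs_nonneg _)
      (by positivity)
    rw [abs_of_nonneg (by positivity)]
    have : Real.cosh y ≤ Real.cosh M := Real.cosh_le_cosh.2 ((hball y hy).trans (le_abs_self M))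
    have := (Real.cosh_pos y).le
    gcongr
  · simp [picardTerm_succ_zero, summable_zero]

theorem hasDerivAt_solP {lam : ℝ} (hl : |lam| ≤ 2) (x : ℝ) :
    HasDerivAt (solP lam) (lam * solU lam x) x := by
  set M := |x| + 1 with hM
  have hM0 : 0 < M := by positivity
  have hball : ∀ y ∈ Set.Ioo (-M) M, |y| ≤ M := fun y hy => (abs_lt.2 hy).le
  have hxM : x ∈ Set.Ioo (-M) M := abs_lt.1 (by rw [hM]; linarith)
  have h := hasDerivAt_tsum_of_isPreconnected (t := Set.Ioo (-M) M) (y₀ := 0) (y := x)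
    (g := fun (n : ℕ) y => lam ^ (n + 1) * picardTerm (2 * n + 1) y)
    (g' := fun (n : ℕ) y => lam ^ (n + 1) * picardTerm (2 * n) y)
    ((summable_majorant_even M).mul_left 2) isOpen_Ioo isPreconnected_Ioo
    (fun n y _ => (hasDerivAt_picardTerm_odd n y).const_mul _) ?_ ⟨by linarith, hM0⟩ ?_ hxM
  · refine h.congr_deriv ?_
    have hs : Summable fun n : ℕ => lam ^ n * picardTerm (2 * n) x :=
      Summable.of_norm_bounded (summable_majorant_even M)
        fun n => abs_pow_mul_picardTerm_le hl (hball x hxM) (by omega)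
    have h0 : solU lam x = ∑' n : ℕ, lam ^ n * picardTerm (2 * n) x := by
      rw [hs.tsum_eq_zero_add]
      simp [solU, picardTerm, mul_add]
    rw [h0, ← tsum_mul_left]
    exact tsum_congr fun n => by ring
  · intro n y hy
    rw [Real.norm_eq_abs, pow_succ', mul_assoc, abs_mul]
    exact mul_le_mul hl (abs_pow_mul_picardTerm_le hl (hball y hy) (by omega)) (abs_nonneg _)
      (by norm_num)
  · simp [picardTerm_succ_zero, summable_zero]

theorem continuousOn_solU (x : ℝ) : ContinuousOn (fun lam => solU lam x) (Set.Icc 0 2) := by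
  have hs : Summable fun n => majorant |x| (2 * (n + 1)) :=
    (summable_nat_add_iff 1).2 (summable_majorant_even |x|)
  refine continuousOn_const.add (continuousOn_tsum (fun n => by fun_prop) hs ?_)
  intro n lam hl
  exact abs_pow_mul_picardTerm_le (by rw [abs_of_nonneg hl.1]; exact hl.2) le_rfl (by omega)

theorem continuousOn_solP (x : ℝ) : ContinuousOn (fun lam => solP lam x) (Set.Icc 0 2) := by
  refine continuousOn_tsum (u := fun n => majorant |x| (2 * n + 1))
    (fun n => by fun_prop) (summable_majorant_odd |x|) ?_
  intro n lam hl
  exact abs_pow_mul_picardTerm_le (by rw [abs_of_nonneg hl.1]; exact hl.2) le_rfl (by omega)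

/-- The even solution `w = u / cosh`. -/
noncomputable def solW (lam x : ℝ) : ℝ := solU lam x / Real.cosh x

/-- The derivative of `w = u / cosh`, expressed through `u` and `p = u' / cosh²`. -/
noncomputable def solW' (lam x : ℝ) : ℝ :=
  Real.cosh x * solP lam x - solU lam x * Real.sinh x / Real.cosh x ^ 2

theorem solves_solW (L : ℝ) {lam : ℝ} (hl : |lam| ≤ 2) :
    IVPEvenModeOne L lam (solW lam) (solW' lam) := by
  refine ⟨fun x _ => HasDerivAt.hasDerivWithinAt ?_, fun x _ => HasDerivAt.hasDerivWithinAt ?_,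
    ?_, ?_⟩
  · have hc : Real.cosh x ≠ 0 := (Real.cosh_pos x).ne'
    refine ((hasDerivAt_solU hl x).div (Real.hasDerivAt_cosh x) hc).congr_deriv ?_
    simp only [solW']
    field_simp
  · have hc : Real.cosh x ≠ 0 := (Real.cosh_pos x).ne'
    refine (((Real.hasDerivAt_cosh x).mul (hasDerivAt_solP hl x)).sub
      (((hasDerivAt_solU hl x).mul (Real.hasDerivAt_sinh x)).div
        ((Real.hasDerivAt_cosh x).pow 2) (pow_ne_zero 2 hc))).congr_deriv ?_
    simp only [solW, Pi.mul_apply, Pi.pow_apply]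
    field_simp
    have hs : Real.sinh x ^ 2 = Real.cosh x ^ 2 - 1 := Real.sinh_sq x
    ring_nf
    rw [hs]
    ring
  · simp [solW, solU, picardTerm_succ_zero]
  · simp [solW', solP, picardTerm_succ_zero]

/-! ### Comparison of solutions -/

/-- A function that starts at `0` and increases strictly on `[0, L]` is positive at `L`. -/
theorem pos_of_hasDerivWithinAt_pos {L : ℝ} (hL : 0 < L) {f f' : ℝ → ℝ} (h0 : f 0 = 0)
    (hf : ∀ x ∈ Set.Icc 0 L, HasDerivWithinAt f (f' x) (Set.Icc 0 L) x)
    (hf' : ∀ x ∈ Set.Ioo 0 L, 0 < f' x) : 0 < f L := by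
  have h : StrictMonoOn f (Set.Icc 0 L) := by
    refine strictMonoOn_of_hasDerivWithinAt_pos (f' := f') (convex_Icc 0 L)
      (fun x hx => (hf x hx).continuousWithinAt) ?_ ?_
    · intro x hx
      exact (hf x (interior_subset hx)).mono interior_subset
    · rwa [interior_Icc]
  have := h ⟨le_rfl, hL.le⟩ ⟨hL.le, le_rfl⟩ hL
  rwa [h0] at this

theorem monotoneOn_of_hasDerivWithinAt {L : ℝ} {f f' : ℝ → ℝ}
    (hf : ∀ x ∈ Set.Icc 0 L, HasDerivWithinAt f (f' x) (Set.Icc 0 L) x)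
    (hf' : ∀ x ∈ Set.Icc 0 L, 0 ≤ f' x) : MonotoneOn f (Set.Icc 0 L) :=
  monotoneOn_of_hasDerivWithinAt_nonneg (f' := f') (convex_Icc 0 L)
    (fun x hx => (hf x hx).continuousWithinAt)
    (fun x hx => (hf x (interior_subset hx)).mono interior_subset)
    (fun x hx => hf' x (interior_subset hx))

/-- Solutions are positive when `λ ≥ 0`: with `u = w cosh` and `p = u' / cosh²`, both `u p` and then
`u²` are nondecreasing, so `u` never reaches `0`. -/
theorem IVPEvenModeOne.pos {L lam : ℝ} (hlam : 0 ≤ lam) {w w' : ℝ → ℝ}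
    (h : IVPEvenModeOne L lam w w') : ∀ x ∈ Set.Icc 0 L, 0 < w x := by
  obtain ⟨h1, h2, h3, h4⟩ := h
  set u : ℝ → ℝ := fun x => w x * Real.cosh x with hu
  set p : ℝ → ℝ := fun x => w' x / Real.cosh x + w x * Real.sinh x / Real.cosh x ^ 2 with hp
  have du : ∀ x ∈ Set.Icc 0 L,
      HasDerivWithinAt u (Real.cosh x ^ 2 * p x) (Set.Icc 0 L) x := by
    intro x hx
    have hc : Real.cosh x ≠ 0 := (Real.cosh_pos x).ne'
    refine ((h1 x hx).mul (Real.hasDerivAt_cosh x).hasDerivWithinAt).congr_deriv ?_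
    simp only [hp]
    field_simp
  have dp : ∀ x ∈ Set.Icc 0 L, HasDerivWithinAt p (lam * u x) (Set.Icc 0 L) x := by
    intro x hx
    have hc : Real.cosh x ≠ 0 := (Real.cosh_pos x).ne'
    have dc := (Real.hasDerivAt_cosh x).hasDerivWithinAt (s := Set.Icc 0 L)
    have ds := (Real.hasDerivAt_sinh x).hasDerivWithinAt (s := Set.Icc 0 L)
    refine (((h2 x hx).div dc hc).add
      (((h1 x hx).mul ds).div (dc.pow 2) (pow_ne_zero 2 hc))).congr_deriv ?_
    simp only [hu, Pi.mul_apply, Pi.pow_apply]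
    field_simp
    have hs : Real.sinh x ^ 2 = Real.cosh x ^ 2 - 1 := Real.sinh_sq x
    ring_nf
    rw [hs]
    ring
  have u0 : u 0 = 1 := by simp [hu, h3]
  have p0 : p 0 = 0 := by simp [hp, h4]
  have up : ∀ x ∈ Set.Icc 0 L, 0 ≤ u x * p x := by
    intro x hx
    have hm := monotoneOn_of_hasDerivWithinAt (fun y hy => (du y hy).mul (dp y hy))
      (fun y _ => by
        have : 0 ≤ (Real.cosh y * p y) ^ 2 + lam * u y ^ 2 := by positivity
        linarith)
    have := hm ⟨le_rfl, hx.1.trans hx.2⟩ hx hx.1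
    simpa [p0] using this
  have usq : ∀ x ∈ Set.Icc 0 L, 1 ≤ u x * u x := by
    intro x hx
    have hm := monotoneOn_of_hasDerivWithinAt (fun y hy => (du y hy).mul (du y hy))
      (fun y hy => by
        have : 0 ≤ Real.cosh y ^ 2 * (u y * p y) := mul_nonneg (by positivity) (up y hy)
        linarith)
    have := hm ⟨le_rfl, hx.1.trans hx.2⟩ hx hx.1
    simpa [u0] using this
  intro x hx
  by_contra! hneg
  have hux : u x ≤ 0 := mul_nonpos_of_nonpos_of_nonneg hneg (Real.cosh_pos x).le
  have hcont : ContinuousOn u (Set.Icc 0 x) := fun y hy =>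
    ((du y ⟨hy.1, hy.2.trans hx.2⟩).continuousWithinAt).mono (Set.Icc_subset_Icc_right hx.2)
  obtain ⟨y, hy, hy0⟩ := intermediate_value_Icc' hx.1 hcont
    (show (0 : ℝ) ∈ Set.Icc (u x) (u 0) from ⟨hux, by rw [u0]; norm_num⟩)
  have := usq y ⟨hy.1, hy.2.trans hx.2⟩
  rw [hy0] at this
  norm_num at this

/-- Two solutions for parameters `0 ≤ λ < μ` have positive Wronskian at `L`, so they cannot both
satisfy the boundary condition. -/
theorem not_both_boundary {L lam mu : ℝ} (hL : 0 < L) (hlam : 0 ≤ lam) (hlt : lam < mu)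
    {w w' v v' : ℝ → ℝ} (hw : IVPEvenModeOne L lam w w') (hv : IVPEvenModeOne L mu v v')
    (bw : w L = L * w' L) (bv : v L = L * v' L) : False := by
  have hwpos := hw.pos hlam
  have hvpos := hv.pos (hlam.trans hlt.le)
  obtain ⟨w1, w2, w3, w4⟩ := hw
  obtain ⟨v1, v2, v3, v4⟩ := hv
  have h := pos_of_hasDerivWithinAt_pos hL (f := fun x => v' x * w x - v x * w' x)
    (f' := fun x => (mu - lam) * (Real.cosh x ^ 2 * (v x * w x))) (by simp [w4, v4])
    (fun x hx => by
      refine (((v2 x hx).mul (w1 x hx)).sub ((v1 x hx).mul (w2 x hx))).congr_deriv ?_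
      ring)
    (fun x hx => by
      have hx' := Set.Ioo_subset_Icc_self hx
      have := hwpos x hx'
      have := hvpos x hx'
      have := Real.cosh_pos x
      have := sub_pos.2 hlt
      positivity)
  simp only [bw, bv] at h
  linarith

/-- At `λ = 2` the solution grows faster than `cosh`: its logarithmic derivative at `L` exceeds
`tanh L = 1 / L`. -/
theorem boundary_pos_at_two {L : ℝ} (hL : 0 < L) (hL1 : L * Real.tanh L = 1)
    {w w' : ℝ → ℝ} (hw : IVPEvenModeOne L 2 w w') : w L < L * w' L := by
  have hwpos := hw.pos (by norm_num)
  obtain ⟨w1, w2, w3, w4⟩ := hw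
  have h := pos_of_hasDerivWithinAt_pos hL
    (f := fun x => w' x * Real.cosh x - w x * Real.sinh x)
    (f' := fun x => (2 * Real.cosh x ^ 2 - 2 / Real.cosh x ^ 2) * (w x * Real.cosh x))
    (by simp [w4])
    (fun x hx => by
      refine (((w2 x hx).mul (Real.hasDerivAt_cosh x).hasDerivWithinAt).sub
        ((w1 x hx).mul (Real.hasDerivAt_sinh x).hasDerivWithinAt)).congr_deriv ?_
      ring)
    (fun x hx => by
      have := hwpos x (Set.Ioo_subset_Icc_self hx)
      have hc := Real.cosh_pos x
      have h1 : 1 < Real.cosh x ^ 2 := one_lt_pow₀ (Real.one_lt_cosh.2 hx.1.ne') (by norm_num)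
      have h2 : 2 / Real.cosh x ^ 2 < 2 * Real.cosh x ^ 2 := by
        rw [div_lt_iff₀ (by positivity)]
        nlinarith
      exact mul_pos (sub_pos.2 h2) (by positivity))
  have hc := Real.cosh_pos L
  have hs : L * Real.sinh L = Real.cosh L := by
    rw [Real.tanh_eq_sinh_div_cosh] at hL1
    field_simp at hL1
    exact hL1
  have h2 := mul_pos hL h
  have h3 : w L * Real.cosh L < (L * w' L) * Real.cosh L := by
    have : w L * Real.cosh L = w L * (L * Real.sinh L) := by rw [hs]
    linarith
  exact lt_of_mul_lt_mul_right h3 hc.le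

/-! ### The eigenvalue -/

/-- There is a unique `λ > 0` for which the even solution of
`w'' = (1 + λ cosh²x − 2/cosh²x) w`, `w 0 = 1`, `w' 0 = 0` satisfies `w L = L·w' L`;
moreover it satisfies `λ < 2`. Here `L` is the unique positive real with `L·tanh L = 1`. -/
theorem unique_even_eigenvalue_mode_one
    (L : ℝ) (hL : 0 < L) (hL1 : L * Real.tanh L = 1) :
    ∃ lam : ℝ, (0 < lam ∧ lam < 2 ∧
        ∃ w w' : ℝ → ℝ, IVPEvenModeOne L lam w w' ∧ w L = L * w' L) ∧
      ∀ mu : ℝ, 0 < mu →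
        (∃ w w' : ℝ → ℝ, IVPEvenModeOne L mu w w' ∧ w L = L * w' L) → mu = lam := by
  have hc : ContinuousOn (fun lam => L * solW' lam L - solW lam L) (Set.Icc 0 2) :=
    (continuousOn_const.mul ((continuousOn_const.mul (continuousOn_solP L)).sub
      (((continuousOn_solU L).mul continuousOn_const).div_const _))).sub
      ((continuousOn_solU L).div_const _)
  have hcosh := Real.cosh_pos L
  have h0 : L * solW' 0 L - solW 0 L < 0 := by
    have hsinh : 0 < Real.sinh L := Real.sinh_pos_iff.2 hL
    have h1 : L * solW' 0 L - solW 0 L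
        = -(L * (Real.sinh L / Real.cosh L ^ 2) + 1 / Real.cosh L) := by
      simp [solW', solW, solU, solP]
      ring
    rw [h1]
    exact neg_neg_of_pos (by positivity)
  have h2 : 0 < L * solW' 2 L - solW 2 L :=
    sub_pos.2 (boundary_pos_at_two hL hL1 (solves_solW L (by norm_num)))
  obtain ⟨lam, hlam, hz⟩ := intermediate_value_Ioo (by norm_num) hc ⟨h0, h2⟩
  have hsol := solves_solW L (lam := lam) (by rw [abs_of_pos hlam.1]; exact hlam.2.le)
  have hbc : solW lam L = L * solW' lam L := (sub_eq_zero.1 hz).symm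
  refine ⟨lam, ⟨hlam.1, hlam.2, _, _, hsol, hbc⟩, ?_⟩
  rintro mu hmu ⟨v, v', hv, hvb⟩
  rcases lt_trichotomy mu lam with h | h | h
  · exact (not_both_boundary hL hmu.le h hv hsol hvb hbc).elim
  · exact h
  · exact (not_both_boundary hL hlam.1.le h hsol hv hbc hvb).elim
end
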